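/- arXiv:1606.01715 — 3 statements merged into one kernel-verified Lean document; each statement's English description precedes it below -/
import Mathlib

section
/- ∑_{p prime : α(p) ≤ x} e_p log p = (3 log r)/π² · x² + O(x log x) as x → ∞, where e_p is the exact power of p dividing a_{α(p)} and r = (1+√5)/2. -/
open Finset Filter Asymptotics

noncomputable def fibAlpha (n : ℕ) : ℕ := sInf {m | 0 < m ∧ n ∣ Nat.fib m}

/-- `e_p`: the exact power of `p` dividing `fib (α p)`. -/
noncomputable def fibE (p : ℕ) : ℕ := (Nat.fib (fibAlpha p)).factorization p

lemma fib_cassini_sq (m : ℕ) :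
    ((Nat.fib (m+1) : ℤ)^2 - Nat.fib (m+1) * Nat.fib m - (Nat.fib m : ℤ)^2)^2 = 1 := by
  induction m with
  | zero => simp
  | succ k ih =>
    rw [show k + 1 + 1 = k + 2 from rfl, Nat.fib_add_two]
    push_cast
    rw [← ih]; ring

lemma not_eight_dvd_lucas (m : ℕ) : ¬ (8 : ℤ) ∣ 2 * Nat.fib (m+1) - Nat.fib m := by
  rintro ⟨u, hu⟩
  have h := fib_cassini_sq m
  have ha : (Nat.fib m : ℤ) = 2 * Nat.fib (m+1) - 8 * u := by linarith
  rw [ha] at h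
  generalize (Nat.fib (m+1) : ℤ) = c at h
  have h2 := congrArg (Int.cast : ℤ → ZMod 16) h
  push_cast at h2
  generalize (c : ZMod 16) = c' at h2
  generalize (u : ZMod 16) = u' at h2
  revert c' u'
  set_option maxRecDepth 100000 in decide

lemma fib_mul_expand (m k : ℕ) : ∃ s t : ℤ,
    (Nat.fib (m*k+1) : ℤ) = (Nat.fib (m+1) : ℤ)^k + (Nat.fib m : ℤ)^2 * s ∧
    2 * (Nat.fib (m+1) : ℤ)^2 * Nat.fib (m*k) = 2 * k * Nat.fib m * (Nat.fib (m+1) : ℤ)^(k+1)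
      - k * (k-1) * (Nat.fib m : ℤ)^2 * (Nat.fib (m+1) : ℤ)^k + (Nat.fib m : ℤ)^3 * t := by
  induction k with
  | zero => exact ⟨0, 0, by simp, by simp⟩
  | succ k ih =>
    obtain ⟨s, t, h1, h2⟩ := ih
    obtain ⟨w, hw⟩ := Nat.isDvdSequence_fib _ _ (Dvd.intro k rfl : m ∣ m * k)
    have e1 : (Nat.fib (m*(k+1)+1) : ℤ)
        = Nat.fib (m*k) * Nat.fib m + Nat.fib (m*k+1) * Nat.fib (m+1) := by
      have := Nat.fib_add (m*k) m
      rw [mul_add, mul_one, this]; push_cast; ring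
    have e2 : (Nat.fib (m*(k+1)) : ℤ)
        = Nat.fib (m*k) * Nat.fib (m+1) + Nat.fib (m*k+1) * Nat.fib m
          - Nat.fib (m*k) * Nat.fib m := by
      have h3 := Nat.fib_add (m*k) (m+1)
      have h4 := Nat.fib_add (m*k) m
      have h5 := @Nat.fib_add_two (m*k+m)
      have h6 := @Nat.fib_add_two m
      rw [show m*k+(m+1)+1 = m*k+m+2 by ring] at h3
      rw [mul_add, mul_one]
      rw [show m+1+1 = m+2 by ring] at h3
      zify at h3 h4 h5 h6
      rw [h6] at h3
      linear_combination -h5 + h3 - h4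
    have hw' : (Nat.fib (m*k) : ℤ) = Nat.fib m * w := by exact_mod_cast hw
    refine ⟨w + s * Nat.fib (m+1),
      t * (Nat.fib (m+1)) - t * Nat.fib m + k*(k-1) * (Nat.fib (m+1) : ℤ)^k
       + 2 * (Nat.fib (m+1) : ℤ)^2 * s, ?_, ?_⟩
    · rw [e1, h1, hw']; ring
    · rw [e2, h1]
      push_cast
      linear_combination ((Nat.fib (m+1) : ℤ) - Nat.fib m) * h2

lemma prime_not_dvd_fib_succ {p m : ℕ} (hp : p.Prime) (h : p ∣ Nat.fib m) :
    ¬ (p : ℤ) ∣ Nat.fib (m+1) := by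
  intro h2
  have := Nat.fib_coprime_fib_succ m
  exact Nat.not_coprime_of_dvd_of_dvd hp.one_lt h (by exact_mod_cast h2) this

lemma fib_mul_expand1 (m k : ℕ) : ∃ t : ℤ,
    (Nat.fib (m+1) : ℤ) * Nat.fib (m*k) = k * Nat.fib m * (Nat.fib (m+1) : ℤ)^k
      + (Nat.fib m : ℤ)^2 * t := by
  induction k with
  | zero => exact ⟨0, by simp⟩
  | succ k ih =>
    obtain ⟨t, h2⟩ := ih
    obtain ⟨s, _, h1, _⟩ := fib_mul_expand m k
    obtain ⟨w, hw⟩ := Nat.isDvdSequence_fib _ _ (Dvd.intro k rfl : m ∣ m * k)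
    have e2 : (Nat.fib (m*(k+1)) : ℤ)
        = Nat.fib (m*k) * Nat.fib (m+1) + Nat.fib (m*k+1) * Nat.fib m
          - Nat.fib (m*k) * Nat.fib m := by
      have h3 := Nat.fib_add (m*k) (m+1)
      have h4 := Nat.fib_add (m*k) m
      have h5 := @Nat.fib_add_two (m*k+m)
      have h6 := @Nat.fib_add_two m
      rw [show m*k+(m+1)+1 = m*k+m+2 by ring] at h3
      rw [mul_add, mul_one]
      rw [show m+1+1 = m+2 by ring] at h3
      zify at h3 h4 h5 h6
      rw [h6] at h3
      linear_combination -h5 + h3 - h4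
    have hw' : (Nat.fib (m*k) : ℤ) = Nat.fib m * w := by exact_mod_cast hw
    refine ⟨t * Nat.fib (m+1) + Nat.fib (m+1) * s * Nat.fib m - Nat.fib (m+1) * w, ?_⟩
    rw [e2, h1]
    push_cast
    linear_combination (Nat.fib (m+1) : ℤ) * h2 - (Nat.fib (m+1) * Nat.fib m : ℤ) * hw'

lemma fib_lte_coprime {p m k j : ℕ} (hp : p.Prime) (h : p ∣ Nat.fib m)
    (hk : ¬ p ∣ k) (hj : p^j ∣ Nat.fib (m*k)) : p^j ∣ Nat.fib m := by
  induction j with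
  | zero => simp
  | succ j ih =>
    have ih := ih ((pow_dvd_pow p (Nat.le_succ j)).trans hj)
    obtain ⟨t, ht⟩ := fib_mul_expand1 m k
    have hpZ : Prime (p : ℤ) := Nat.prime_iff_prime_int.mp hp
    have hc := prime_not_dvd_fib_succ hp h
    have d1 : (p : ℤ)^(j+1) ∣ Nat.fib (m*k) := by exact_mod_cast hj
    have d2 : (p : ℤ)^(j+1) ∣ (Nat.fib m : ℤ)^2 := by
      rw [pow_succ, pow_two]
      exact mul_dvd_mul (by exact_mod_cast ih) (by exact_mod_cast h)
    have d3 : (p : ℤ)^(j+1) ∣ k * (Nat.fib (m+1) : ℤ)^k * Nat.fib m := by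
      have : (k * (Nat.fib (m+1) : ℤ)^k * Nat.fib m : ℤ) = (Nat.fib (m+1) : ℤ) * Nat.fib (m*k)
         - (Nat.fib m : ℤ)^2 * t := by rw [ht]; ring
      rw [this]
      exact dvd_sub (d1.mul_left _) (d2.mul_right _)
    have hnd : ¬ (p:ℤ) ∣ k * (Nat.fib (m+1) : ℤ)^k := by
      intro hh
      rcases hpZ.dvd_or_dvd hh with h1 | h1
      · exact hk (by exact_mod_cast h1)
      · exact hc (hpZ.dvd_of_dvd_pow h1)
    have := hpZ.pow_dvd_of_dvd_mul_left _ hnd d3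
    exact_mod_cast this

lemma fib_lte_odd {p m j : ℕ} (hp : p.Prime) (hp2 : p ≠ 2) (h : p ∣ Nat.fib m)
    (hj : p^(j+1) ∣ Nat.fib (m*p)) : p^j ∣ Nat.fib m := by
  induction j with
  | zero => simp
  | succ j ih =>
    have ih := ih ((pow_dvd_pow p (Nat.le_succ _)).trans hj)
    obtain ⟨-, t, -, ht⟩ := fib_mul_expand m p
    have hpZ : Prime (p : ℤ) := Nat.prime_iff_prime_int.mp hp
    have hc := prime_not_dvd_fib_succ hp h
    have d1 : (p : ℤ)^(j+2) ∣ Nat.fib (m*p) := by exact_mod_cast hj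
    have hZ : (p : ℤ) ∣ Nat.fib m := by exact_mod_cast h
    have ihZ : (p : ℤ)^j ∣ Nat.fib m := by exact_mod_cast ih
    have d2 : (p : ℤ)^(j+2) ∣ (p : ℤ) * (Nat.fib m : ℤ)^2 := by
      rw [show (p : ℤ)^(j+2) = p * ((p : ℤ)^j * p) by ring, pow_two]
      exact mul_dvd_mul dvd_rfl (mul_dvd_mul ihZ hZ)
    have d2' : (p : ℤ)^(j+2) ∣ (Nat.fib m : ℤ)^3 := by
      rw [show (p : ℤ)^(j+2) = (p : ℤ)^j * p * p by ring,
        show (Nat.fib m : ℤ)^3 = Nat.fib m * Nat.fib m * Nat.fib m by ring]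
      exact mul_dvd_mul (mul_dvd_mul ihZ hZ) hZ
    have d3 : (p : ℤ)^(j+2) ∣ p * (2 * (Nat.fib (m+1) : ℤ)^(p+1) * Nat.fib m) := by
      have : (p * (2 * (Nat.fib (m+1) : ℤ)^(p+1) * Nat.fib m) : ℤ)
        = 2 * (Nat.fib (m+1) : ℤ)^2 * Nat.fib (m*p)
         + (p * (Nat.fib m : ℤ)^2) * ((p-1) * (Nat.fib (m+1) : ℤ)^p) - (Nat.fib m : ℤ)^3 * t := by
        rw [ht]; ring
      rw [this]
      exact dvd_sub (dvd_add (d1.mul_left _) (d2.mul_right _)) (d2'.mul_right _)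
    rw [show (p : ℤ)^(j+2) = p * (p : ℤ)^(j+1) by ring] at d3
    have d4 := (mul_dvd_mul_iff_left hpZ.ne_zero).mp d3
    have hnd : ¬ (p:ℤ) ∣ 2 * (Nat.fib (m+1) : ℤ)^(p+1) := by
      intro hh
      rcases hpZ.dvd_or_dvd hh with h1 | h1
      · exact hp2 ((Nat.prime_dvd_prime_iff_eq hp Nat.prime_two).mp (by exact_mod_cast h1))
      · exact hc (hpZ.dvd_of_dvd_pow h1)
    have := hpZ.pow_dvd_of_dvd_mul_left _ hnd d4
    exact_mod_cast this

lemma pow_dvd_aux {p : ℤ} (hp : Prime p) (l : ℕ) : ∀ (i : ℕ) (a b : ℤ), p^(i+l) ∣ a * b →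
    ¬ p^(l+1) ∣ b → p^i ∣ a := by
  induction l with
  | zero =>
    intro i a b h hb
    exact hp.pow_dvd_of_dvd_mul_right i (by simpa using hb) (by simpa using h)
  | succ l ih =>
    intro i a b h hb
    by_cases hpb : p ∣ b
    · obtain ⟨b', rfl⟩ := hpb
      refine ih i a b' ?_ ?_
      · rw [show p^(i+(l+1)) = p * p^(i+l) by ring, show a * (p*b') = p * (a*b') by ring] at h
        exact (mul_dvd_mul_iff_left hp.ne_zero).mp h
      · intro h2
        exact hb (by rw [pow_succ' p (l+1)]; exact mul_dvd_mul dvd_rfl h2)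
    · exact (pow_dvd_pow p (Nat.le_add_right _ _)).trans (hp.pow_dvd_of_dvd_mul_right _ hpb h)

lemma fib_lte_two {m j : ℕ} (hj : 2^(j+2) ∣ Nat.fib (m*2)) : 2^j ∣ Nat.fib m := by
  have e : (Nat.fib (m*2) : ℤ) = Nat.fib m * (2 * Nat.fib (m+1) - Nat.fib m) := by
    rw [mul_comm, Nat.fib_two_mul]
    have : Nat.fib m ≤ 2 * Nat.fib (m+1) := by
      have := @Nat.fib_le_fib_succ m
      omega
    push_cast [this]; ring
  have hj' : (2:ℤ)^(j+2) ∣ Nat.fib m * (2 * Nat.fib (m+1) - Nat.fib m) := by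
    rw [← e]; exact_mod_cast hj
  have h8 := not_eight_dvd_lucas m
  have hp : Prime (2:ℤ) := Int.prime_two
  exact_mod_cast pow_dvd_aux hp 2 j _ _ hj' (by simpa using h8)

/-- Weak lifting-the-exponent statement, uniform in the prime. -/
lemma fib_lte {p m : ℕ} (hp : p.Prime) (h : p ∣ Nat.fib m) (k : ℕ) (hk : 0 < k) :
    ∀ j, p^j ∣ Nat.fib (m*k) → p^j ∣ Nat.fib m * k^2 := by
  induction k using Nat.strong_induction_on with
  | _ k ih =>
    intro j hj
    by_cases hpk : p ∣ k
    · obtain ⟨k', rfl⟩ := hpk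
      have hk' : 0 < k' := Nat.pos_of_mul_pos_left hk
      have ih' := ih k' (by nlinarith [hp.two_le]) hk'
      have hdvd : p ∣ Nat.fib (m*k') := h.trans (Nat.isDvdSequence_fib _ _ (Dvd.intro k' rfl))
      rw [show m * (p*k') = (m*k')*p by ring] at hj
      have e : Nat.fib m * (p*k')^2 = p^2 * (Nat.fib m * k'^2) := by ring
      rw [e]
      rcases Nat.lt_or_ge j 2 with hj2 | hj2
      · exact (pow_dvd_pow p hj2.le).trans (Dvd.intro _ rfl)
      · obtain ⟨i, rfl⟩ : ∃ i, j = i + 2 := ⟨j-2, by omega⟩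
        have : p^i ∣ Nat.fib (m*k') := by
          by_cases hp2 : p = 2
          · subst hp2; exact fib_lte_two hj
          · exact fib_lte_odd hp hp2 hdvd ((pow_dvd_pow p (by omega)).trans hj)
        rw [pow_add, mul_comm]
        exact mul_dvd_mul dvd_rfl (ih' i this)
    · exact (fib_lte_coprime hp h hpk hj).mul_right _

lemma fibAlpha_spec {q : ℕ} (h : 0 < fibAlpha q) : q ∣ Nat.fib (fibAlpha q) := by
  have hne : {m | 0 < m ∧ q ∣ Nat.fib m}.Nonempty := Nat.nonempty_of_pos_sInf h
  exact (Nat.sInf_mem hne).2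

lemma fibAlpha_pos {q n : ℕ} (hn : 0 < n) (h : q ∣ Nat.fib n) : 0 < fibAlpha q :=
  (Nat.sInf_mem (⟨n, hn, h⟩ : {m | 0 < m ∧ q ∣ Nat.fib m}.Nonempty)).1

lemma fibAlpha_dvd {q n : ℕ} (hn : 0 < n) (h : q ∣ Nat.fib n) : fibAlpha q ∣ n := by
  have hpos := fibAlpha_pos hn h
  have h1 : q ∣ Nat.fib (Nat.gcd (fibAlpha q) n) := by
    rw [Nat.fib_gcd]; exact Nat.dvd_gcd (fibAlpha_spec hpos) h
  have h2 : fibAlpha q ≤ Nat.gcd (fibAlpha q) n :=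
    Nat.sInf_le ⟨Nat.gcd_pos_of_pos_left _ hpos, h1⟩
  have h3 : Nat.gcd (fibAlpha q) n = fibAlpha q :=
    le_antisymm (Nat.gcd_le_left _ hpos) h2
  exact Nat.gcd_eq_left_iff_dvd.mp h3

/-- The exponent bound: if `p^j ∣ fib n`, `n ≤ N`, then `j ≤ e_p` or `p ≤ N` and
`p^(j - e_p) ≤ N^2`. -/
lemma fibE_bound {p n N j : ℕ} (hp : p.Prime) (hn : 0 < n) (hnN : n ≤ N)
    (hj : p^j ∣ Nat.fib n) : j ≤ fibE p ∨ (p ≤ N ∧ j ≤ fibE p + Nat.log p (N^2)) := by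
  by_cases hje : j ≤ fibE p
  · exact Or.inl hje
  right
  push Not at hje
  have hpn : p ∣ Nat.fib n := (dvd_pow_self p (by omega)).trans hj
  have hpos := fibAlpha_pos hn hpn
  obtain ⟨k, rfl⟩ := fibAlpha_dvd hn hpn
  have hk : 0 < k := Nat.pos_of_mul_pos_left hn
  have h1 := fib_lte hp (fibAlpha_spec hpos) k hk j hj
  have hF : Nat.fib (fibAlpha p) ≠ 0 := (Nat.fib_pos.mpr hpos).ne'
  have h2 : j ≤ fibE p + (k^2).factorization p := by
    have := (hp.pow_dvd_iff_le_factorization (by positivity)).mp h1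
    rw [Nat.factorization_mul hF (by positivity)] at this
    simpa [fibE] using this
  have hkN : k ≤ N := le_trans (Nat.le_mul_of_pos_left k hpos) hnN
  constructor
  · have : p ∣ k^2 := by
      by_contra hc
      rw [Nat.factorization_eq_zero_of_not_dvd hc] at h2
      omega
    exact (Nat.le_of_dvd hk (hp.dvd_of_dvd_pow this)).trans hkN
  · refine h2.trans (Nat.add_le_add_left ?_ _)
    refine Nat.le_log_of_pow_le hp.one_lt ?_
    exact (Nat.ordProj_le p (by positivity)).trans (Nat.pow_le_pow_left hkN 2)

open ArithmeticFunction in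
/-- `G(d) = ∑_{α(q) = d} Λ(q)` -/
noncomputable def fibG (d : ℕ) : ℝ :=
  ∑ q ∈ (Nat.fib d).divisors.filter (fun q => fibAlpha q = d), vonMangoldt q

open ArithmeticFunction in
lemma sum_fibG {n : ℕ} (hn : 0 < n) : ∑ d ∈ n.divisors, fibG d = Real.log (Nat.fib n) := by
  rw [← vonMangoldt_sum]
  rw [← sum_fiberwise_of_maps_to (s := (Nat.fib n).divisors) (t := n.divisors)
    (g := fibAlpha)]
  · refine sum_congr rfl fun d hd => ?_
    have hdn := Nat.dvd_of_mem_divisors hd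
    have hdp : 0 < d := Nat.pos_of_mem_divisors hd
    unfold fibG
    refine sum_congr ?_ fun _ _ => rfl
    ext q
    simp only [mem_filter, Nat.mem_divisors]
    constructor
    · rintro ⟨⟨h1, h2⟩, h3⟩
      exact ⟨⟨h1.trans (Nat.isDvdSequence_fib _ _ hdn), (Nat.fib_pos.mpr hn).ne'⟩, h3⟩
    · rintro ⟨⟨h1, h2⟩, h3⟩
      subst h3
      exact ⟨⟨fibAlpha_spec hdp, (Nat.fib_pos.mpr hdp).ne'⟩, rfl⟩
  · intro q hq
    rw [Nat.mem_divisors] at hq ⊢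
    exact ⟨fibAlpha_dvd hn hq.1, hn.ne'⟩

noncomputable def fibQ (N : ℕ) : Finset ℕ :=
  (Icc 1 (Nat.fib N)).filter (fun q => 0 < fibAlpha q ∧ fibAlpha q ≤ N ∧ IsPrimePow q)

/-- Primes with rank at most `N`. -/
noncomputable def fibP (N : ℕ) : Finset ℕ :=
  (Icc 1 (Nat.fib N)).filter (fun p => p.Prime ∧ fibAlpha p ≤ N)

open ArithmeticFunction in
lemma sum_fibG_Ioc (N : ℕ) : ∑ n ∈ Ioc 0 N, fibG n = ∑ q ∈ fibQ N, vonMangoldt q := by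
  rw [← sum_fiberwise_of_maps_to (s := fibQ N) (t := Ioc 0 N) (g := fibAlpha)]
  · refine sum_congr rfl fun n hn => ?_
    rw [mem_Ioc] at hn
    unfold fibG fibQ
    symm
    refine sum_subset ?_ ?_
    · intro q hq
      simp only [mem_filter, mem_Icc, Nat.mem_divisors] at hq ⊢
      obtain ⟨⟨h1, h2, h3, h4⟩, rfl⟩ := hq
      exact ⟨⟨fibAlpha_spec h2, (Nat.fib_pos.mpr h2).ne'⟩, rfl⟩
    · intro q hq hq2
      simp only [mem_filter, mem_Icc, Nat.mem_divisors] at hq hq2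
      rw [vonMangoldt_apply, if_neg]
      intro hpp
      apply hq2
      obtain ⟨⟨h1, h2⟩, rfl⟩ := hq
      refine ⟨⟨⟨hpp.one_lt.le, ?_⟩, hn.1, hn.2, hpp⟩, rfl⟩
      exact (Nat.le_of_dvd (Nat.pos_of_ne_zero h2) h1).trans (Nat.fib_mono hn.2)
  · intro q hq
    simp only [fibQ, mem_filter] at hq
    exact mem_Ioc.mpr ⟨hq.2.1, hq.2.2.1⟩

lemma fibQ_card_bounds {N p : ℕ} (hp : p ∈ fibP N) :
    fibE p ≤ ((fibQ N).filter (fun q => q.minFac = p)).card ∧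
    ((fibQ N).filter (fun q => q.minFac = p)).card
      ≤ fibE p + if p ≤ N then Nat.log p (N^2) else 0 := by
  simp only [fibP, mem_filter, mem_Icc] at hp
  obtain ⟨⟨-, -⟩, hpp, hpN⟩ := hp
  have inj : Function.Injective (fun j => p^j) := Nat.pow_right_injective hpp.two_le
  constructor
  · have : (Icc 1 (fibE p)).image (fun j => p^j) ⊆ (fibQ N).filter (fun q => q.minFac = p) := by
      intro q hq
      simp only [mem_image, mem_Icc] at hq
      obtain ⟨j, ⟨hj1, hj2⟩, rfl⟩ := hq
      have hapos : 0 < fibAlpha p := by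
        rcases Nat.eq_zero_or_pos (fibAlpha p) with h | h
        · exfalso
          simp [fibE, h] at hj2
          omega
        · exact h
      have hF := (Nat.fib_pos.mpr hapos)
      have hd : p^j ∣ Nat.fib (fibAlpha p) :=
        (hpp.pow_dvd_iff_le_factorization hF.ne').mpr hj2
      have h1 := fibAlpha_pos hapos hd
      have h2 := Nat.le_of_dvd hapos (fibAlpha_dvd hapos hd)
      simp only [fibQ, mem_filter, mem_Icc]
      refine ⟨⟨⟨Nat.one_le_pow _ _ hpp.pos, ?_⟩, h1, h2.trans hpN, ?_⟩, ?_⟩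
      · exact (Nat.le_of_dvd hF hd).trans (Nat.fib_mono hpN)
      · exact hpp.isPrimePow.pow (by omega)
      · exact hpp.pow_minFac (by omega)
    have := card_le_card this
    rw [card_image_of_injective _ inj] at this
    simpa using this
  · have : (fibQ N).filter (fun q => q.minFac = p) ⊆
      (Icc 1 (fibE p + if p ≤ N then Nat.log p (N^2) else 0)).image (fun j => p^j) := by
      intro q hq
      simp only [fibQ, mem_filter, mem_Icc] at hq
      obtain ⟨⟨-, h1, h2, h3⟩, h4⟩ := hq
      obtain ⟨p', j, hp', hj, rfl⟩ := (isPrimePow_nat_iff _).mp h3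
      have : p' = p := by rw [← h4, hp'.pow_minFac (by omega)]
      subst this
      refine mem_image.mpr ⟨j, mem_Icc.mpr ⟨hj, ?_⟩, rfl⟩
      rcases fibE_bound hp' h1 h2 (fibAlpha_spec h1) with h | ⟨h, h'⟩
      · omega
      · rw [if_pos h]; exact h'
    have := card_le_card this
    rw [card_image_of_injective _ inj] at this
    simpa using this

open ArithmeticFunction in
lemma sum_fibQ (N : ℕ) : ∑ q ∈ fibQ N, vonMangoldt q
    = ∑ p ∈ fibP N, ((fibQ N).filter (fun q => q.minFac = p)).card * Real.log p := by
  rw [← sum_fiberwise_of_maps_to (s := fibQ N) (t := fibP N) (g := Nat.minFac)]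
  · refine sum_congr rfl fun p hp => ?_
    rw [← nsmul_eq_mul]
    refine sum_eq_card_nsmul fun q hq => ?_
    simp only [fibQ, mem_filter] at hq
    rw [vonMangoldt_apply, if_pos hq.1.2.2.2, hq.2]
  · intro q hq
    simp only [fibQ, fibP, mem_filter, mem_Icc] at hq ⊢
    obtain ⟨⟨h1, h1'⟩, h2, h3, h4⟩ := hq
    have hd : q.minFac ∣ Nat.fib (fibAlpha q) := (Nat.minFac_dvd q).trans (fibAlpha_spec h2)
    exact ⟨⟨Nat.minFac_pos q, (Nat.minFac_le h1).trans h1'⟩, Nat.minFac_prime h4.one_lt.ne',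
      (Nat.le_of_dvd h2 (fibAlpha_dvd h2 hd)).trans h3⟩

lemma target_compare (N : ℕ) (hN : 1 ≤ N) :
    |(∑ p ∈ fibP N, (fibE p : ℝ) * Real.log p) - ∑ n ∈ Ioc 0 N, fibG n|
      ≤ 2 * N * Real.log N := by
  rw [sum_fibG_Ioc, sum_fibQ, abs_sub_comm, ← sum_sub_distrib]
  have hlog : 0 ≤ Real.log N := Real.log_natCast_nonneg N
  have h1 : ∀ p ∈ fibP N, |(((fibQ N).filter (fun q => q.minFac = p)).card : ℝ) * Real.log p
      - (fibE p : ℝ) * Real.log p| ≤ if p ≤ N then 2 * Real.log N else 0 := by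
    intro p hp
    obtain ⟨h1, h2⟩ := fibQ_card_bounds hp
    have hpp : p.Prime := by simp only [fibP, mem_filter] at hp; exact hp.2.1
    have hlp : 0 < Real.log p := Real.log_pos (by exact_mod_cast hpp.one_lt)
    have h1' : (fibE p : ℝ) ≤ (((fibQ N).filter (fun q => q.minFac = p)).card : ℝ) := by
      exact_mod_cast h1
    rw [← sub_mul, abs_of_nonneg (mul_nonneg (by linarith) hlp.le)]
    split_ifs at h2 ⊢ with hle
    · have h2' : (((fibQ N).filter (fun q => q.minFac = p)).card : ℝ)
          ≤ fibE p + (Nat.log p (N^2) : ℕ) := by exact_mod_cast h2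
      have h3 : ((p:ℝ))^(Nat.log p (N^2)) ≤ (N:ℝ)^2 := by
        exact_mod_cast Nat.pow_log_le_self p (by positivity)
      have h4 := Real.log_le_log (pow_pos (by exact_mod_cast hpp.pos) _) h3
      rw [Real.log_pow, Real.log_pow] at h4
      push_cast at h4
      nlinarith
    · have h2' : (((fibQ N).filter (fun q => q.minFac = p)).card : ℝ) ≤ fibE p := by
        exact_mod_cast h2
      nlinarith
  refine (abs_sum_le_sum_abs _ _).trans ((sum_le_sum h1).trans ?_)
  rw [← sum_filter, sum_const, nsmul_eq_mul]
  have hc : ((fibP N).filter (fun p => p ≤ N)).card ≤ N := by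
    have : (fibP N).filter (fun p => p ≤ N) ⊆ Icc 1 N := by
      intro p hp
      simp only [fibP, mem_filter, mem_Icc] at hp ⊢
      exact ⟨hp.1.1.1, hp.2⟩
    simpa using card_le_card this
  have hc' : (((fibP N).filter (fun p => p ≤ N)).card : ℝ) ≤ N := by exact_mod_cast hc
  nlinarith

open ArithmeticFunction in
lemma moebius_hasSum : HasSum (fun n : ℕ => (moebius n : ℝ) / (n:ℝ)^2) (6 / Real.pi^2) := by
  have hs : 1 < (2:ℂ).re := by norm_num
  have h1 := (LSeriesSummable_moebius_iff.mpr hs).hasSum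
  have h2 : LSeries (fun n => ((moebius n : ℤ) : ℂ)) 2 = ((6 / Real.pi^2 : ℝ) : ℂ) := by
    have h3 := LSeries_one_mul_Lseries_moebius hs
    rw [LSeries_one_eq_riemannZeta hs, riemannZeta_two] at h3
    have hpi : (Real.pi : ℂ) ≠ 0 := by exact_mod_cast Real.pi_ne_zero
    push_cast
    field_simp at h3 ⊢
    linear_combination h3
  have h4 : HasSum (fun n => LSeries.term (fun n => ((moebius n : ℤ) : ℂ)) 2 n)
      ((6 / Real.pi^2 : ℝ) : ℂ) := by
    rw [← h2]; exact h1
  rw [← Complex.hasSum_ofReal (f := fun n : ℕ => (moebius n : ℝ) / (n:ℝ)^2)]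
  convert h4 using 2 with n
  rcases Nat.eq_zero_or_pos n with rfl | hn
  · simp
  · rw [LSeries.term_of_ne_zero hn.ne']
    push_cast
    norm_cast

open ArithmeticFunction in
lemma moebius_tail (N : ℕ) (hN : 1 ≤ N) :
    |(∑ m ∈ Ioc 0 N, (moebius m : ℝ) / (m:ℝ)^2) - 6 / Real.pi^2| ≤ 1 / (N:ℝ) := by
  have h := moebius_hasSum.tendsto_sum_nat
  have h2 : Tendsto (fun M : ℕ => |(∑ m ∈ Ioc 0 N, (moebius m : ℝ) / (m:ℝ)^2)
      - ∑ m ∈ range (M+1), (moebius m : ℝ) / (m:ℝ)^2|) atTop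
      (nhds |(∑ m ∈ Ioc 0 N, (moebius m : ℝ) / (m:ℝ)^2) - 6 / Real.pi^2|) :=
    (Tendsto.sub tendsto_const_nhds (h.comp (tendsto_add_atTop_nat 1))).abs
  refine le_of_tendsto h2 ?_
  filter_upwards [eventually_ge_atTop N] with M hM
  have e1 : ∑ m ∈ range (M+1), (moebius m : ℝ) / (m:ℝ)^2
      = (∑ m ∈ Ioc 0 N, (moebius m : ℝ) / (m:ℝ)^2)
        + ∑ m ∈ Ioc N M, (moebius m : ℝ) / (m:ℝ)^2 := by
    rw [sum_Ioc_consecutive _ (Nat.zero_le _) hM]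
    symm
    apply sum_subset
    · intro m hm
      simp only [mem_Ioc, mem_range] at hm ⊢
      omega
    · intro m hm hm2
      simp only [mem_Ioc, mem_range] at hm hm2
      have : m = 0 := by omega
      subst this; simp
  rw [e1, sub_add_cancel_left, abs_neg]
  calc |∑ m ∈ Ioc N M, (moebius m : ℝ) / (m:ℝ)^2|
      ≤ ∑ m ∈ Ioc N M, |(moebius m : ℝ) / (m:ℝ)^2| := abs_sum_le_sum_abs _ _
    _ ≤ ∑ m ∈ Ioc N M, ((m:ℝ)^2)⁻¹ := by
        refine sum_le_sum fun m _ => ?_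
        have : |(moebius m : ℝ)| ≤ 1 := by exact_mod_cast abs_moebius_le_one (n := m)
        rw [abs_div, abs_of_nonneg (sq_nonneg (m:ℝ)), div_eq_mul_inv]
        exact mul_le_of_le_one_left (by positivity) this
    _ ≤ (N:ℝ)⁻¹ - (M:ℝ)⁻¹ := sum_Ioc_inv_sq_le_sub (by omega) hM
    _ ≤ 1 / N := by
        have : (0:ℝ) ≤ (M:ℝ)⁻¹ := by positivity
        rw [one_div]; linarith

lemma log_fib_bounds (d : ℕ) (hd : 0 < d) :
    |Real.log (Nat.fib d) - d * Real.log Real.goldenRatio| ≤ 2 * Real.log Real.goldenRatio := by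
  obtain ⟨n, rfl⟩ : ∃ n, d = n + 1 := ⟨d - 1, by omega⟩
  have h := Real.goldenRatio_mul_fib_succ_add_fib n
  have h1 := Real.one_lt_goldenRatio
  have hL : 0 < Real.log Real.goldenRatio := Real.log_pos h1
  have hF : (0:ℝ) < Nat.fib (n+1) := by exact_mod_cast Nat.fib_pos.mpr hd
  have hF0 : (0:ℝ) ≤ Nat.fib n := by positivity
  have hFF : (Nat.fib n : ℝ) ≤ Nat.fib (n+1) := by exact_mod_cast Nat.fib_le_fib_succ
  have hu : (Nat.fib (n+1) : ℝ) ≤ Real.goldenRatio^(n+1) := by nlinarith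
  have hl : Real.goldenRatio^(n+1) ≤ Nat.fib (n+1) * Real.goldenRatio^2 := by
    rw [Real.goldenRatio_sq]; nlinarith
  have hu' := Real.log_le_log hF hu
  have hl' := Real.log_le_log (pow_pos Real.goldenRatio_pos _) hl
  rw [Real.log_mul hF.ne' (pow_pos Real.goldenRatio_pos _).ne'] at hl'
  rw [Real.log_pow] at hu' hl'
  rw [Real.log_pow] at hl'
  rw [abs_le]
  constructor <;> push_cast at * <;> linarith

lemma sum_log_fib_bound (M : ℕ) :
    |(∑ d ∈ Ioc 0 M, Real.log (Nat.fib d)) - Real.log Real.goldenRatio * (M * (M+1) / 2)|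
      ≤ 2 * Real.log Real.goldenRatio * M := by
  induction M with
  | zero => simp
  | succ M ih =>
    rw [sum_Ioc_succ_top (Nat.zero_le _)]
    have h := log_fib_bounds (M+1) (Nat.succ_pos _)
    rw [abs_le] at *
    push_cast at *
    constructor <;> linarith [ih.1, ih.2, h.1, h.2]

lemma sum_log_fib_bound' (N m : ℕ) (hm : 0 < m) (hmN : m ≤ N) :
    |(∑ d ∈ Ioc 0 (N/m), Real.log (Nat.fib d))
        - Real.log Real.goldenRatio / 2 * ((N:ℝ)^2 / (m:ℝ)^2)|
      ≤ 3 * Real.log Real.goldenRatio * (N * (m:ℝ)⁻¹) := by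
  have h := sum_log_fib_bound (N/m)
  have hL : 0 < Real.log Real.goldenRatio := Real.log_pos Real.one_lt_goldenRatio
  have hm' : (0:ℝ) < m := by exact_mod_cast hm
  obtain ⟨y, hy⟩ : ∃ y : ℝ, y = N / m := ⟨_, rfl⟩
  rw [← div_pow, ← div_eq_mul_inv, ← hy]
  have hu : ((N/m : ℕ) : ℝ) ≤ y := hy ▸ Nat.cast_div_le
  have hl : y < ((N/m : ℕ) : ℝ) + 1 := by
    rw [hy, div_lt_iff₀ hm']
    have := Nat.lt_div_mul_add hm (a := N)
    have h3 : (N:ℝ) < ((N/m : ℕ) : ℝ) * m + m := by exact_mod_cast this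
    linarith
  have hM : (1:ℝ) ≤ ((N/m : ℕ) : ℝ) := by
    exact_mod_cast Nat.div_pos hmN hm
  generalize ((N/m : ℕ) : ℝ) = M at *
  have b1 : M * (M+1) ≤ y^2 + y := by nlinarith
  have b2 : y^2 - y ≤ M * (M+1) := by nlinarith
  have c1 := mul_le_mul_of_nonneg_left b1 hL.le
  have c2 := mul_le_mul_of_nonneg_left b2 hL.le
  have c3 := mul_le_mul_of_nonneg_left hu hL.le
  have c4 : 0 ≤ Real.log Real.goldenRatio * y := by apply mul_nonneg hL.le; linarith
  rw [abs_le] at *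
  constructor <;> nlinarith [h.1, h.2]

/-- `log (fib n)` as an arithmetic function. -/
noncomputable def logFibAF : ArithmeticFunction ℝ where
  toFun n := Real.log (Nat.fib n)
  map_zero' := by rw [Nat.fib_zero, Nat.cast_zero, Real.log_zero]

lemma logFibAF_apply (n : ℕ) : logFibAF n = Real.log (Nat.fib n) := rfl

open ArithmeticFunction in
lemma sum_fibG_moebius (N : ℕ) : ∑ n ∈ Ioc 0 N, fibG n
    = ∑ m ∈ Ioc 0 N, (moebius m : ℝ) * ∑ d ∈ Ioc 0 (N/m), Real.log (Nat.fib d) := by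
  have h := (sum_eq_iff_sum_mul_moebius_eq (f := fibG)
    (g := fun n => Real.log (Nat.fib n))).mp (fun n hn => sum_fibG hn)
  have h2 := sum_Ioc_mul_eq_sum_sum ((moebius : ArithmeticFunction ℤ) : ArithmeticFunction ℝ)
    logFibAF N
  simp only [ArithmeticFunction.intCoe_apply, logFibAF_apply] at h2
  rw [← h2]
  refine sum_congr rfl fun n hn => ?_
  rw [← h n (mem_Ioc.mp hn).1, ArithmeticFunction.mul_apply]
  simp only [ArithmeticFunction.intCoe_apply, logFibAF_apply]

open ArithmeticFunction in
lemma sum_fibG_asymp (N : ℕ) (hN : 1 ≤ N) :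
    |(∑ n ∈ Ioc 0 N, fibG n) - 3 * Real.log Real.goldenRatio / Real.pi^2 * (N:ℝ)^2|
      ≤ 3 * Real.log Real.goldenRatio * N * (1 + Real.log N)
        + Real.log Real.goldenRatio / 2 * N := by
  have hL : 0 < Real.log Real.goldenRatio := Real.log_pos Real.one_lt_goldenRatio
  have hN' : (0:ℝ) < N := by exact_mod_cast hN
  set L := Real.log Real.goldenRatio with hLdef
  rw [sum_fibG_moebius]
  have A : |(∑ m ∈ Ioc 0 N, (moebius m : ℝ) * ∑ d ∈ Ioc 0 (N/m), Real.log (Nat.fib d))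
      - L / 2 * (N:ℝ)^2 * ∑ m ∈ Ioc 0 N, (moebius m : ℝ) / (m:ℝ)^2|
      ≤ 3 * L * N * (1 + Real.log N) := by
    rw [mul_sum, ← sum_sub_distrib]
    calc _ ≤ ∑ m ∈ Ioc 0 N, |(moebius m : ℝ) * ∑ d ∈ Ioc 0 (N/m), Real.log (Nat.fib d)
            - L / 2 * (N:ℝ)^2 * ((moebius m : ℝ) / (m:ℝ)^2)| := abs_sum_le_sum_abs _ _
      _ ≤ ∑ m ∈ Ioc 0 N, 3 * L * (N * (m:ℝ)⁻¹) := by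
          refine sum_le_sum fun m hm => ?_
          rw [mem_Ioc] at hm
          have hb := sum_log_fib_bound' N m hm.1 hm.2
          have hmu : |(moebius m : ℝ)| ≤ 1 := by exact_mod_cast abs_moebius_le_one (n := m)
          rw [show (moebius m : ℝ) * ∑ d ∈ Ioc 0 (N/m), Real.log (Nat.fib d)
            - L / 2 * (N:ℝ)^2 * ((moebius m : ℝ) / (m:ℝ)^2)
            = (moebius m : ℝ) * (∑ d ∈ Ioc 0 (N/m), Real.log (Nat.fib d)
              - L / 2 * ((N:ℝ)^2 / (m:ℝ)^2)) by ring, abs_mul]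
          exact (mul_le_of_le_one_left (abs_nonneg _) hmu).trans hb
      _ = 3 * L * N * ∑ m ∈ Ioc 0 N, (m:ℝ)⁻¹ := by
          rw [mul_sum]; exact sum_congr rfl fun _ _ => by ring
      _ ≤ _ := by
          refine mul_le_mul_of_nonneg_left ?_ (by positivity)
          have := harmonic_le_one_add_log N
          rw [harmonic_eq_sum_Icc] at this
          push_cast at this
          exact this
  have B : |L / 2 * (N:ℝ)^2 * (∑ m ∈ Ioc 0 N, (moebius m : ℝ) / (m:ℝ)^2)
      - 3 * L / Real.pi^2 * (N:ℝ)^2| ≤ L / 2 * N := by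
    rw [show L / 2 * (N:ℝ)^2 * (∑ m ∈ Ioc 0 N, (moebius m : ℝ) / (m:ℝ)^2)
      - 3 * L / Real.pi^2 * (N:ℝ)^2 = L / 2 * (N:ℝ)^2 *
        ((∑ m ∈ Ioc 0 N, (moebius m : ℝ) / (m:ℝ)^2) - 6 / Real.pi^2) by ring, abs_mul,
        abs_of_nonneg (by positivity : 0 ≤ L / 2 * (N:ℝ)^2)]
    refine (mul_le_mul_of_nonneg_left (moebius_tail N hN) (by positivity)).trans ?_
    apply le_of_eq
    field_simp
  exact (abs_sub_le _ _ _).trans (add_le_add A B)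

theorem primitive_prime_weighted_sum_asymp :
    (fun x : ℝ =>
        (∑ p ∈ (Icc 1 (Nat.fib ⌊x⌋₊)).filter (fun p => p.Prime ∧ fibAlpha p ≤ ⌊x⌋₊),
            (fibE p : ℝ) * Real.log p)
          - 3 * Real.log ((1 + Real.sqrt 5) / 2) / Real.pi ^ 2 * x ^ 2)
      =O[atTop] fun x : ℝ => x * Real.log x := by
  refine IsBigO.of_bound 20 ?_
  filter_upwards [eventually_ge_atTop 3] with x hx
  have hN3 : 3 ≤ ⌊x⌋₊ := Nat.le_floor (by exact_mod_cast hx)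
  have hNx : (⌊x⌋₊ : ℝ) ≤ x := Nat.floor_le (by linarith)
  have hxN : x < (⌊x⌋₊ : ℝ) + 1 := Nat.lt_floor_add_one x
  have h1 := target_compare ⌊x⌋₊ (by omega)
  have h2 := sum_fibG_asymp ⌊x⌋₊ (by omega)
  unfold fibP at h1
  generalize ⌊x⌋₊ = N at *
  have hN0 : (3:ℝ) ≤ N := by exact_mod_cast hN3
  change _ at h2
  rw [Real.norm_eq_abs, Real.norm_eq_abs]
  have hgr : (1 + Real.sqrt 5) / 2 = Real.goldenRatio := rfl
  rw [hgr]
  have hL : 0 < Real.log Real.goldenRatio := Real.log_pos Real.one_lt_goldenRatio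
  have hL1 : Real.log Real.goldenRatio ≤ 1 := by
    have := Real.log_le_sub_one_of_pos Real.goldenRatio_pos
    linarith [Real.goldenRatio_lt_two]
  generalize Real.log Real.goldenRatio = L at *
  have hlogN : 0 ≤ Real.log N := Real.log_natCast_nonneg N
  have hlogx : Real.log N ≤ Real.log x := Real.log_le_log (by linarith) hNx
  have hlog1 : 1 ≤ Real.log x := by
    rw [Real.le_log_iff_exp_le (by linarith)]
    linarith [Real.exp_one_lt_d9]
  have h3 : |3 * L / Real.pi^2 * (N:ℝ)^2 - 3 * L / Real.pi^2 * x^2| ≤ 2 * x := by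
    have hc : 0 ≤ 3 * L / Real.pi^2 := by positivity
    have hc1 : 3 * L / Real.pi^2 ≤ 1 := by
      rw [div_le_one (by positivity)]
      nlinarith [Real.pi_gt_three]
    rw [← mul_sub, abs_mul, abs_of_nonneg hc]
    refine (mul_le_of_le_one_left (abs_nonneg _) hc1).trans ?_
    rw [abs_le]
    constructor <;> nlinarith
  have hxl : x ≤ x * Real.log x := by nlinarith
  have hNl : N * Real.log N ≤ x * Real.log x :=
    mul_le_mul hNx hlogx hlogN (by linarith)
  have h4 : 3 * L * N * (1 + Real.log N) + L / 2 * N ≤ 7 * (x * Real.log x) := by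
    have a1 : L * (N * (1 + Real.log N)) ≤ 1 * (N * (1 + Real.log N)) :=
      mul_le_mul_of_nonneg_right hL1 (by positivity)
    have a2 : L * N ≤ 1 * N := mul_le_mul_of_nonneg_right hL1 (by positivity)
    nlinarith
  rw [abs_of_nonneg (by linarith : 0 ≤ x * Real.log x)]
  rw [abs_le] at *
  constructor <;> linarith [h1.1, h1.2, h2.1, h2.2, h3.1, h3.2]
end

section
/- Let π_α(x) := #{p prime : α(p) ≤ x}, the number of primes dividing some Fibonacci number a_n with n ≤ x. Then limsup_{x→∞} (log x)/x² · π_α(x) ≤ (3 log r)/(2π²), where r = (1+√5)/2. -/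
open Finset Filter

/-- The number of primes dividing some Fibonacci number `a_n` with `n ≤ x`. -/
noncomputable def piAlpha (x : ℝ) : ℕ :=
  ((Icc 1 (Nat.fib ⌊x⌋₊)).filter (fun p => p.Prime ∧ fibAlpha p ≤ ⌊x⌋₊)).card

open ArithmeticFunction in
lemma fib_descend (p : ℕ) (k : ℕ) : ∀ i : ℕ, ((Nat.fib i : ZMod p) = Nat.fib (i + k)) →
    ((Nat.fib (i+1) : ZMod p) = Nat.fib (i + 1 + k)) → (Nat.fib k : ZMod p) = 0 := by
  intro i
  induction i with
  | zero => intro h _; simpa using h.symm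
  | succ i ih =>
    intro h1 h2
    refine ih ?_ h1
    have e1 : Nat.fib (i + 1 + 1) = Nat.fib i + Nat.fib (i+1) := Nat.fib_add_two
    have e2 : Nat.fib (i + 1 + 1 + k) = Nat.fib (i + k) + Nat.fib (i+1+k) := by
      rw [show i + 1 + 1 + k = (i + k) + 2 by ring, Nat.fib_add_two, show i + k + 1 = i + 1 + k by ring]
    rw [e1, e2] at h2
    push_cast at h2
    rw [h1] at h2
    exact add_right_cancel h2

lemma exists_fib_dvd (p : ℕ) (hp : 0 < p) : ∃ m, 0 < m ∧ p ∣ Nat.fib m := by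
  haveI : NeZero p := ⟨hp.ne'⟩
  obtain ⟨i, j, hij, h⟩ := Finite.exists_ne_map_eq_of_infinite
    (fun n : ℕ => ((Nat.fib n : ZMod p), (Nat.fib (n+1) : ZMod p)))
  wlog hlt : i < j generalizing i j
  · exact this j i hij.symm h.symm (by omega)
  obtain ⟨k, rfl⟩ := Nat.exists_eq_add_of_lt hlt
  simp only [Prod.mk.injEq] at h
  refine ⟨k + 1, by omega, (ZMod.natCast_eq_zero_iff _ _).1 (fib_descend p (k+1) i ?_ ?_)⟩
  · exact h.1
  · rw [h.2]; congr 2; ring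

lemma fibAlpha_spec_s12 (p : ℕ) (hp : 0 < p) : 0 < fibAlpha p ∧ p ∣ Nat.fib (fibAlpha p) :=
  Nat.sInf_mem (exists_fib_dvd p hp)

lemma fibAlpha_dvd_s12 (j m : ℕ) (hj : 0 < j) (hm : 0 < m) (h : j ∣ Nat.fib m) : fibAlpha j ∣ m := by
  have hs := fibAlpha_spec_s12 j hj
  have h1 : j ∣ Nat.fib (Nat.gcd (fibAlpha j) m) := by
    rw [Nat.fib_gcd]; exact Nat.dvd_gcd hs.2 h
  have h2 : fibAlpha j ≤ Nat.gcd (fibAlpha j) m :=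
    Nat.sInf_le ⟨Nat.gcd_pos_of_pos_right _ hm, h1⟩
  have h3 : Nat.gcd (fibAlpha j) m = fibAlpha j :=
    le_antisymm (Nat.gcd_le_left _ hs.1) h2
  exact h3 ▸ Nat.gcd_dvd_right _ _

/-- The logarithm of the primitive part of `F_n`. -/
noncomputable def primLog (n : ℕ) : ℝ :=
  ∑ j ∈ (Nat.fib n).divisors.filter (fun j => fibAlpha j = n), ArithmeticFunction.vonMangoldt j

lemma sum_primLog (m : ℕ) (hm : 0 < m) : ∑ d ∈ m.divisors, primLog d = Real.log (Nat.fib m) := by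
  have hF : Nat.fib m ≠ 0 := (Nat.fib_pos.2 hm).ne'
  rw [← ArithmeticFunction.vonMangoldt_sum]
  rw [← Finset.sum_fiberwise_of_maps_to (s := (Nat.fib m).divisors) (t := m.divisors) (g := fibAlpha)]
  · refine Finset.sum_congr rfl fun d hd => ?_
    have hdm := Nat.dvd_of_mem_divisors hd
    have hd0 : 0 < d := Nat.pos_of_mem_divisors hd
    unfold primLog
    congr 1
    ext j
    simp only [Finset.mem_filter, Nat.mem_divisors]
    constructor
    · rintro ⟨⟨h1, h2⟩, h3⟩
      exact ⟨⟨h1.trans (Nat.fib_dvd _ _ hdm), hF⟩, h3⟩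
    · rintro ⟨⟨h1, h2⟩, h3⟩
      have hj : 0 < j := Nat.pos_of_dvd_of_pos h1 (Nat.pos_of_ne_zero hF)
      exact ⟨⟨h3 ▸ (fibAlpha_spec_s12 j hj).2, (Nat.fib_pos.2 hd0).ne'⟩, h3⟩
  · intro j hj
    have hj' := Nat.dvd_of_mem_divisors hj
    exact Nat.mem_divisors.2 ⟨fibAlpha_dvd_s12 j m (Nat.pos_of_mem_divisors hj) hm hj', hm.ne'⟩

/-- Partial sums of `log F_d`. -/
noncomputable def logFibSum (M : ℕ) : ℝ := ∑ d ∈ Finset.Ioc 0 M, Real.log (Nat.fib d)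

lemma sum_primLog_eq (N : ℕ) : ∑ n ∈ Finset.Ioc 0 N, primLog n =
    ∑ e ∈ Finset.Ioc 0 N, (ArithmeticFunction.moebius e : ℝ) * logFibSum (N / e) := by
  let g : ArithmeticFunction ℝ := ⟨fun n => Real.log (Nat.fib n), by simp⟩
  let f : ArithmeticFunction ℝ := ((ArithmeticFunction.moebius : ArithmeticFunction ℤ) : ArithmeticFunction ℝ)
  have h := ArithmeticFunction.sum_Ioc_mul_eq_sum_sum f g N
  have hinv := (ArithmeticFunction.sum_eq_iff_sum_mul_moebius_eq (f := primLog)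
    (g := fun n => Real.log (Nat.fib n))).1 sum_primLog
  calc _ = ∑ n ∈ Finset.Ioc 0 N, (f * g) n := by
        refine Finset.sum_congr rfl fun n hn => ?_
        rw [← hinv n (Finset.mem_Ioc.1 hn).1, ArithmeticFunction.mul_apply]
        rfl
    _ = _ := h

lemma sum_log_primes_le (N : ℕ) :
    ∑ p ∈ (Icc 1 (Nat.fib N)).filter (fun p => p.Prime ∧ fibAlpha p ≤ N), Real.log p
      ≤ ∑ n ∈ Finset.Ioc 0 N, primLog n := by
  rw [← Finset.sum_fiberwise_of_maps_to (t := Finset.Ioc 0 N) (g := fibAlpha)]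
  · refine Finset.sum_le_sum fun n hn => ?_
    have hn0 := (Finset.mem_Ioc.1 hn).1
    unfold primLog
    calc _ = ∑ p ∈ ((Icc 1 (Nat.fib N)).filter (fun p => p.Prime ∧ fibAlpha p ≤ N)).filter
          (fun p => fibAlpha p = n), ArithmeticFunction.vonMangoldt p := by
          refine Finset.sum_congr rfl fun p hp => ?_
          simp only [Finset.mem_filter] at hp
          rw [ArithmeticFunction.vonMangoldt_apply_prime hp.1.2.1]
      _ ≤ _ := by
          refine Finset.sum_le_sum_of_subset_of_nonneg ?_ fun _ _ _ =>
            ArithmeticFunction.vonMangoldt_nonneg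
          intro p hp
          simp only [Finset.mem_filter] at hp
          simp only [Finset.mem_filter, Nat.mem_divisors]
          exact ⟨⟨hp.2 ▸ (fibAlpha_spec_s12 p hp.1.2.1.pos).2, (Nat.fib_pos.2 hn0).ne'⟩, hp.2⟩
  · intro p hp
    simp only [Finset.mem_filter] at hp
    exact Finset.mem_Ioc.2 ⟨(fibAlpha_spec_s12 p hp.2.1.pos).1, hp.2.2⟩

lemma fib_le_gold (n : ℕ) : (Nat.fib (n+1) : ℝ) ≤ Real.goldenRatio ^ n := by
  have h := Real.goldenRatio_sq
  have hg := Real.goldenRatio_pos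
  induction n using Nat.twoStepInduction with
  | zero => simp
  | one => simpa using Real.one_lt_goldenRatio.le
  | more n h1 h2 =>
    rw [Nat.fib_add_two]; push_cast
    calc _ ≤ Real.goldenRatio ^ n + Real.goldenRatio ^ (n+1) := add_le_add h1 h2
      _ = _ := by rw [pow_add _ n 2, h]; ring

lemma gold_le_fib (n : ℕ) : Real.goldenRatio ^ n ≤ Nat.fib (n+2) := by
  have h := Real.goldenRatio_sq
  have hg := Real.goldenRatio_pos
  induction n using Nat.twoStepInduction with
  | zero => simp
  | one => simpa [Nat.fib] using Real.goldenRatio_lt_two.le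
  | more n h1 h2 =>
    rw [Nat.fib_add_two]; push_cast
    calc _ = Real.goldenRatio ^ n + Real.goldenRatio ^ (n+1) := by rw [pow_add _ n 2, h]; ring
      _ ≤ _ := add_le_add h1 h2

lemma gold_log_pos : 0 < Real.log Real.goldenRatio := Real.log_pos Real.one_lt_goldenRatio

lemma logFibSum_bounds (M : ℕ) :
    Real.log Real.goldenRatio / 2 * ((M:ℝ)^2 - 3 * M) ≤ logFibSum M ∧
    logFibSum M ≤ Real.log Real.goldenRatio / 2 * (M:ℝ)^2 := by
  have hL := gold_log_pos
  induction M with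
  | zero => simp [logFibSum]
  | succ M ih =>
    have e : logFibSum (M+1) = logFibSum M + Real.log (Nat.fib (M+1)) := by
      unfold logFibSum
      rw [Finset.sum_Ioc_succ_top (by omega)]
    have hp : (0:ℝ) < Nat.fib (M+1) := by exact_mod_cast Nat.fib_pos.2 (by omega)
    have u : Real.log (Nat.fib (M+1)) ≤ M * Real.log Real.goldenRatio := by
      rw [← Real.log_pow]; exact Real.log_le_log hp (fib_le_gold M)
    have l : ((M:ℝ) - 1) * Real.log Real.goldenRatio ≤ Real.log (Nat.fib (M+1)) := by
      rcases M with _ | M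
      · simpa using hL.le
      · push_cast
        rw [add_sub_cancel_right, ← Real.log_pow]
        exact Real.log_le_log (pow_pos Real.goldenRatio_pos _) (gold_le_fib M)
    rw [e]; push_cast
    constructor <;> nlinarith [ih.1, ih.2]

lemma logFibSum_nonneg (M : ℕ) : 0 ≤ logFibSum M :=
  Finset.sum_nonneg fun _ _ => Real.log_natCast_nonneg _
open Topology in
lemma tendsto_logFibSum (e : ℕ) (he : 0 < e) :
    Tendsto (fun N : ℕ => logFibSum (N / e) / (N:ℝ)^2) atTop
      (𝓝 (Real.log Real.goldenRatio / 2 / (e:ℝ)^2)) := by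
  have hL := gold_log_pos
  have heR : (0:ℝ) < e := by exact_mod_cast he
  have hq : Tendsto (fun N : ℕ => ((N / e : ℕ) : ℝ) / N) atTop (𝓝 (1 / e)) := by
    have := (tendsto_nat_floor_mul_div_atTop (R := ℝ) (a := 1 / e) (by positivity)).comp
      tendsto_natCast_atTop_atTop
    refine this.congr fun N => ?_
    simp only [Function.comp]
    rw [one_div_mul_eq_div, Nat.floor_div_natCast, Nat.floor_natCast]
  have hi : Tendsto (fun N : ℕ => (1:ℝ) / N) atTop (𝓝 0) := tendsto_one_div_atTop_nhds_zero_nat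
  have hup : Tendsto (fun N : ℕ => Real.log Real.goldenRatio / 2 * (((N / e : ℕ) : ℝ) / N)^2) atTop
      (𝓝 (Real.log Real.goldenRatio / 2 / (e:ℝ)^2)) := by
    convert! (hq.pow 2).const_mul (Real.log Real.goldenRatio / 2) using 2
    ring
  have hlo : Tendsto (fun N : ℕ => Real.log Real.goldenRatio / 2 *
      ((((N / e : ℕ) : ℝ) / N)^2 - 3 * (((N / e : ℕ) : ℝ) / N) * (1 / N))) atTop
      (𝓝 (Real.log Real.goldenRatio / 2 / (e:ℝ)^2)) := by
    convert! ((hq.pow 2).sub ((hq.const_mul 3).mul hi)).const_mul (Real.log Real.goldenRatio / 2) using 2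
    ring
  refine tendsto_of_tendsto_of_tendsto_of_le_of_le' hlo hup ?_ ?_
  · filter_upwards [eventually_gt_atTop 0] with N hN
    have hN' : (0:ℝ) < N := by exact_mod_cast hN
    rw [le_div_iff₀ (by positivity)]
    refine le_trans (le_of_eq ?_) (logFibSum_bounds (N / e)).1
    field_simp
  · filter_upwards [eventually_gt_atTop 0] with N hN
    have hN' : (0:ℝ) < N := by exact_mod_cast hN
    rw [div_le_iff₀ (by positivity)]
    refine le_trans (logFibSum_bounds (N / e)).2 (le_of_eq ?_)
    field_simp

lemma tsum_moebius : ∑' e : ℕ, (ArithmeticFunction.moebius e : ℝ) / (e:ℝ)^2 = 6 / Real.pi ^ 2 := by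
  have h := ArithmeticFunction.LSeries_zeta_mul_Lseries_moebius (s := 2) (by norm_num)
  rw [ArithmeticFunction.LSeries_zeta_eq_riemannZeta (by norm_num), riemannZeta_two] at h
  have h2 : LSeries (fun n => ((ArithmeticFunction.moebius n : ℤ) : ℂ)) 2 =
      ((∑' e : ℕ, (ArithmeticFunction.moebius e : ℝ) / (e:ℝ)^2 : ℝ) : ℂ) := by
    rw [LSeries, Complex.ofReal_tsum]
    refine tsum_congr fun n => ?_
    rcases eq_or_ne n 0 with rfl | hn
    · simp
    · rw [LSeries.term_of_ne_zero hn]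
      push_cast
      congr 1
      exact_mod_cast Complex.cpow_natCast (n:ℂ) 2
  rw [h2] at h
  have h3 : Real.pi ^ 2 / 6 * (∑' e : ℕ, (ArithmeticFunction.moebius e : ℝ) / (e:ℝ)^2) = 1 := by
    exact_mod_cast h
  have := Real.pi_pos
  field_simp at h3 ⊢
  linarith

open Topology in
lemma tendsto_sum_primLog :
    Tendsto (fun N : ℕ => (∑ n ∈ Finset.Ioc 0 N, primLog n) / (N:ℝ)^2) atTop
      (𝓝 (3 * Real.log Real.goldenRatio / Real.pi ^ 2)) := by
  have hL := gold_log_pos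
  have key : Tendsto (fun N : ℕ => ∑' e : ℕ, (ArithmeticFunction.moebius e : ℝ) *
      (logFibSum (N / e) / (N:ℝ)^2)) atTop
      (𝓝 (∑' e : ℕ, (ArithmeticFunction.moebius e : ℝ) * (Real.log Real.goldenRatio / 2 / (e:ℝ)^2))) := by
    refine tendsto_tsum_of_dominated_convergence
      (bound := fun e : ℕ => Real.log Real.goldenRatio / 2 * (1 / (e:ℝ)^2)) ?_ ?_ ?_
    · exact (Real.summable_one_div_nat_pow.2 (by norm_num)).mul_left _
    · intro e
      rcases Nat.eq_zero_or_pos e with rfl | he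
      · simp
      · exact (tendsto_logFibSum e he).const_mul _
    · filter_upwards [eventually_gt_atTop 0] with N hN e
      have hN' : (0:ℝ) < N := by exact_mod_cast hN
      rcases Nat.eq_zero_or_pos e with rfl | he
      · simp
      have he' : (0:ℝ) < e := by exact_mod_cast he
      rw [norm_mul]
      have h1 : ‖(ArithmeticFunction.moebius e : ℝ)‖ ≤ 1 := by
        rw [Real.norm_eq_abs]; exact_mod_cast ArithmeticFunction.abs_moebius_le_one
      have h2 : ‖logFibSum (N / e) / (N:ℝ)^2‖ ≤ Real.log Real.goldenRatio / 2 * (1 / (e:ℝ)^2) := by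
        rw [Real.norm_of_nonneg (div_nonneg (logFibSum_nonneg _) (by positivity)),
          div_le_iff₀ (by positivity)]
        refine (logFibSum_bounds _).2.trans ?_
        rw [mul_assoc]
        gcongr
        have : ((N / e : ℕ):ℝ) ≤ N / e := Nat.cast_div_le
        calc ((N / e : ℕ):ℝ)^2 ≤ ((N:ℝ) / e)^2 := by gcongr
          _ = _ := by ring
      calc _ ≤ 1 * _ := mul_le_mul h1 h2 (norm_nonneg _) zero_le_one
        _ = _ := one_mul _
  have e1 : ∑' e : ℕ, (ArithmeticFunction.moebius e : ℝ) * (Real.log Real.goldenRatio / 2 / (e:ℝ)^2)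
      = 3 * Real.log Real.goldenRatio / Real.pi ^ 2 := by
    have : ∀ e : ℕ, (ArithmeticFunction.moebius e : ℝ) * (Real.log Real.goldenRatio / 2 / (e:ℝ)^2)
      = Real.log Real.goldenRatio / 2 * ((ArithmeticFunction.moebius e : ℝ) / (e:ℝ)^2) := by
      intro e; ring
    simp_rw [this]
    rw [tsum_mul_left, tsum_moebius]; ring
  rw [e1] at key
  refine key.congr fun N => ?_
  rw [sum_primLog_eq, Finset.sum_div, tsum_eq_sum (s := Finset.Ioc 0 N)]
  · exact Finset.sum_congr rfl fun e _ => by ring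
  · intro e he
    rcases Nat.eq_zero_or_pos e with rfl | h0
    · simp
    · have : N < e := by
        by_contra hh
        exact he (Finset.mem_Ioc.2 ⟨h0, by omega⟩)
      rw [Nat.div_eq_of_lt this]
      simp [logFibSum]

lemma piAlpha_bound (x T : ℝ) (hT : 1 < T) :
    (piAlpha x : ℝ) ≤ T + (∑ n ∈ Finset.Ioc 0 ⌊x⌋₊, primLog n) / Real.log T := by
  have hlT := Real.log_pos hT
  set P := (Icc 1 (Nat.fib ⌊x⌋₊)).filter (fun p => p.Prime ∧ fibAlpha p ≤ ⌊x⌋₊) with hP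
  have hsum := sum_log_primes_le ⌊x⌋₊
  rw [← hP] at hsum
  have hcard : (piAlpha x : ℝ) = ((P.filter (fun p : ℕ => (p:ℝ) ≤ T)).card : ℝ) +
      ((P.filter (fun p : ℕ => ¬ (p:ℝ) ≤ T)).card : ℝ) := by
    rw [← Nat.cast_add, Finset.card_filter_add_card_filter_not]
    rfl
  have hpos : ∀ p ∈ P, 0 < p := fun p hp => by
    simp only [hP, Finset.mem_filter] at hp; exact hp.2.1.pos
  rw [hcard]
  refine add_le_add ?_ ?_
  · have : P.filter (fun p : ℕ => (p:ℝ) ≤ T) ⊆ Finset.Ioc 0 ⌊T⌋₊ := by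
      intro p hp
      rw [Finset.mem_filter] at hp
      exact Finset.mem_Ioc.2 ⟨hpos p hp.1, Nat.le_floor hp.2⟩
    have h2 := Finset.card_le_card this
    rw [Nat.card_Ioc, Nat.sub_zero] at h2
    calc _ ≤ ((⌊T⌋₊ : ℕ) : ℝ) := by exact_mod_cast h2
      _ ≤ T := Nat.floor_le (by linarith)
  · rw [le_div_iff₀ hlT]
    refine le_trans ?_ hsum
    calc _ = ∑ p ∈ P.filter (fun p : ℕ => ¬ (p:ℝ) ≤ T), Real.log T := by simp
      _ ≤ ∑ p ∈ P.filter (fun p : ℕ => ¬ (p:ℝ) ≤ T), Real.log p := by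
          refine Finset.sum_le_sum fun p hp => ?_
          rw [Finset.mem_filter] at hp
          exact Real.log_le_log (by linarith) (not_le.1 hp.2).le
      _ ≤ _ := Finset.sum_le_sum_of_subset_of_nonneg (Finset.filter_subset _ _)
          fun _ _ _ => Real.log_natCast_nonneg _

theorem piAlpha_limsup_le :
    limsup (fun x : ℝ => Real.log x / x ^ 2 * (piAlpha x : ℝ)) atTop
      ≤ 3 * Real.log ((1 + Real.sqrt 5) / 2) / (2 * Real.pi ^ 2) := by
  change _ ≤ 3 * Real.log Real.goldenRatio / (2 * Real.pi ^ 2)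
  set L := Real.log Real.goldenRatio with hLdef
  set G : ℕ → ℝ := fun N => ∑ n ∈ Finset.Ioc 0 N, primLog n with hG
  have hll : Tendsto (fun x : ℝ => Real.log (Real.log x) / Real.log x) atTop (nhds 0) :=
    (Real.isLittleO_log_id_atTop.tendsto_div_nhds_zero).comp Real.tendsto_log_atTop
  have hfl : Tendsto (fun x : ℝ => (⌊x⌋₊ : ℝ) / x) atTop (nhds 1) := tendsto_nat_floor_div_atTop
  have hGx : Tendsto (fun x : ℝ => G ⌊x⌋₊ / (⌊x⌋₊ : ℝ) ^ 2) atTop (nhds (3 * L / Real.pi ^ 2)) :=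
    tendsto_sum_primLog.comp tendsto_nat_floor_atTop
  have hil : Tendsto (fun x : ℝ => (Real.log x)⁻¹) atTop (nhds 0) :=
    tendsto_inv_atTop_zero.comp Real.tendsto_log_atTop
  have hden : Tendsto (fun x : ℝ => (2 - 2 * (Real.log (Real.log x) / Real.log x))⁻¹) atTop
      (nhds (2 - 2 * 0)⁻¹) := (tendsto_const_nhds.sub (hll.const_mul 2)).inv₀ (by norm_num)
  have hlim : Tendsto (fun x : ℝ => (Real.log x)⁻¹ +
      (2 - 2 * (Real.log (Real.log x) / Real.log x))⁻¹ *
        (G ⌊x⌋₊ / (⌊x⌋₊ : ℝ) ^ 2 * ((⌊x⌋₊ : ℝ) / x) ^ 2)) atTop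
      (nhds (3 * L / (2 * Real.pi ^ 2))) := by
    convert! hil.add (hden.mul (hGx.mul (hfl.pow 2))) using 2
    have := Real.pi_pos
    field_simp
    ring
  rw [← hlim.limsup_eq]
  refine limsup_le_limsup ?_ ?_ hlim.isBoundedUnder_le
  · have hsm : ∀ᶠ x : ℝ in atTop, Real.log (Real.log x) / Real.log x < 1 / 2 :=
      hll.eventually (gt_mem_nhds (by norm_num))
    filter_upwards [hsm, eventually_gt_atTop (Real.exp 1)] with x hx hxe
    have hx1 : 1 < x := lt_trans (by simp) hxe
    have hx0 : 0 < x := by linarith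
    have hl1 : 1 < Real.log x := by
      rw [Real.lt_log_iff_exp_lt hx0]; exact hxe
    have hl0 : 0 < Real.log x := by linarith
    have hT : Real.log (x ^ 2 / Real.log x ^ 2) =
        Real.log x * (2 - 2 * (Real.log (Real.log x) / Real.log x)) := by
      rw [Real.log_div (by positivity) (by positivity), Real.log_pow, Real.log_pow]
      push_cast
      field_simp
    have hTpos : 0 < Real.log (x ^ 2 / Real.log x ^ 2) := by
      rw [hT]; exact mul_pos hl0 (by linarith)
    have hT1 : 1 < x ^ 2 / Real.log x ^ 2 := (Real.log_pos_iff (by positivity)).1 hTpos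
    have hb := piAlpha_bound x _ hT1
    rw [hT] at hb
    have hf : (0:ℝ) < ⌊x⌋₊ := by exact_mod_cast Nat.floor_pos.2 hx1.le
    have hd : 0 < 2 - 2 * (Real.log (Real.log x) / Real.log x) := by linarith
    calc _ ≤ Real.log x / x ^ 2 * _ := mul_le_mul_of_nonneg_left hb (by positivity)
      _ = _ := by
        change Real.log x / x ^ 2 * (_ + G ⌊x⌋₊ / _) = _
        generalize 2 - 2 * (Real.log (Real.log x) / Real.log x) = D at hd ⊢
        field_simp
  · refine IsBoundedUnder.isCoboundedUnder_le ⟨0, ?_⟩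
    rw [eventually_map]
    filter_upwards [eventually_gt_atTop 1] with x hx
    have := Real.log_pos hx
    positivity
end

section
/- For every positive integer m, ∑_{d : α(d) | m} φ(d) = a_m; that is, the m-th Fibonacci number equals the sum of φ(d) over all d whose rank of apparition divides m. -/
open Finset

/-- `a_m = ∑_{d : α(d) ∣ m} φ(d)`; every such `d` divides `a_m`, hence lies in
`Icc 1 (fib m)`. -/
theorem fib_eq_sum_totient_alpha (m : ℕ) (hm : 0 < m) :
    ∑ d ∈ (Icc 1 (Nat.fib m)).filter (fun d => fibAlpha d ∣ m), Nat.totient d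
      = Nat.fib m := by
  have key : ∀ d, fibAlpha d ∣ m ↔ d ∣ Nat.fib m := by
    intro d
    constructor
    · intro h
      have hpos : 0 < fibAlpha d := Nat.pos_of_dvd_of_pos h hm
      have hne : {k | 0 < k ∧ d ∣ Nat.fib k}.Nonempty := Nat.nonempty_of_pos_sInf hpos
      have hmem : d ∣ Nat.fib (fibAlpha d) := (Nat.sInf_mem hne).2
      exact hmem.trans (Nat.fib_dvd _ _ h)
    · intro h
      have hne : {k | 0 < k ∧ d ∣ Nat.fib k}.Nonempty := ⟨m, hm, h⟩
      have hmem : 0 < fibAlpha d ∧ d ∣ Nat.fib (fibAlpha d) := Nat.sInf_mem hne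
      have hg : d ∣ Nat.fib (Nat.gcd (fibAlpha d) m) := by
        rw [Nat.fib_gcd]
        exact Nat.dvd_gcd hmem.2 h
      have hle : fibAlpha d ≤ Nat.gcd (fibAlpha d) m :=
        Nat.sInf_le ⟨Nat.gcd_pos_of_pos_right _ hm, hg⟩
      have heq : Nat.gcd (fibAlpha d) m = fibAlpha d :=
        le_antisymm (Nat.gcd_le_left _ hmem.1) hle
      exact Nat.gcd_eq_left_iff_dvd.mp heq
  have hset : (Icc 1 (Nat.fib m)).filter (fun d => fibAlpha d ∣ m) = (Nat.fib m).divisors := by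
    ext d
    have hf : 0 < Nat.fib m := Nat.fib_pos.mpr hm
    simp only [Finset.mem_filter, Finset.mem_Icc, Nat.mem_divisors, key]
    constructor
    · rintro ⟨_, h⟩
      exact ⟨h, hf.ne'⟩
    · rintro ⟨h, _⟩
      exact ⟨⟨Nat.pos_of_dvd_of_pos h hf, Nat.le_of_dvd hf h⟩, h⟩
  rw [hset]
  exact Nat.sum_totient _
end
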